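/- A countable discrete group G is amenable if and only if there is no family (f_g)_{g ∈ G} of elements of ℓ∞(G) with Σ_{g ∈ G} ‖f_g‖_∞ < ∞ such that Σ_{g ∈ G} (g·f_g − f_g) = 1, the sum converging in the supremum norm and 1 denoting the constant function with value 1. (This is the non-vanishing of the fundamental class ι[1] in the ℓ¹-homology group H₀^{ℓ¹}(G, ℓ∞(G)).) -/

import Mathlib

noncomputable section
open scoped ENNReal

/-- `ℓ∞(G)`: the Banach space of bounded real-valued functions on `G` with the sup norm. -/
abbrev Linf (G : Type*) : Type _ := ↥(lp (fun _ : G => ℝ) ∞)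

/-- The left-translation action of `G` on `ℓ∞(G)`: `(g · f)(h) = f (g⁻¹ h)`. -/
def ltrans {G : Type*} [Group G] (g : G) (f : Linf G) : Linf G :=
  ⟨fun h => f (g⁻¹ * h),
    memℓp_infty ⟨‖f‖, by
      rintro x ⟨h, rfl⟩
      exact lp.norm_apply_le_norm ENNReal.top_ne_zero f (g⁻¹ * h)⟩⟩

/-- The constant function `1` as an element of `ℓ∞(G)`. -/
def lone (G : Type*) : Linf G :=
  ⟨fun _ => 1, memℓp_infty ⟨1, by rintro x ⟨h, rfl⟩; simp⟩⟩

/-!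
If `μ` is a positive functional then `‖μ‖ = μ 1`; an invariant one kills every `∑ (g · f_g - f_g)`,
so this sum cannot be `1` unless `μ = 0`.

Conversely, a functional `μ` with `‖μ‖ ≤ 1` and `μ 1 = 1` is positive. By Hahn–Banach there is
such a `μ` vanishing on all `g · f - f`, unless some finite sum `u = ∑ (g · f_g - f_g)` has
`‖1 - u‖ < 1`. In the latter case the approximate solution can be made exact. With `S` the support
of the family `(f_g)`, the operator `∂` sending `(F_g)_{g ∈ S}` to `∑ (g · F_g - F_g)` is the
adjoint of `D φ = (g⁻¹ · φ - φ)_{g ∈ S}` on `ℓ¹(G)`. Pairing `|φ|` with `1 = u + (1 - u)` gives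
`‖φ‖ ≤ (∑ ‖f_g‖) ‖D φ‖ + ‖φ‖ ‖1 - u‖`, so `D` is bounded below. Hence every functional on `ℓ¹(G)`
factors through `D`, which says that `∂` is onto `ℓ∞(G)`.
-/

open scoped lp

section HahnBanach

variable {𝕜 : Type*} [RCLike 𝕜]

theorem exists_dual_eq_infDist {E : Type*} [SeminormedAddCommGroup E] [NormedSpace 𝕜 E]
    (p : Submodule 𝕜 E) (x : E) :
    ∃ Λ : StrongDual 𝕜 E, ‖Λ‖ ≤ 1 ∧ Λ x = (Metric.infDist x p : 𝕜) ∧ ∀ y ∈ p, Λ y = 0 := by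
  obtain ⟨Λ, hΛ, hΛx⟩ := exists_dual_vector'' 𝕜 (p.mkQ x)
  have norm_apply_le (y : E) : ‖Λ (p.mkQ y)‖ ≤ 1 * ‖y‖ :=
    (Λ.le_of_opNorm_le hΛ _).trans (by gcongr; exact Submodule.Quotient.norm_mk_le p y)
  refine ⟨(Λ.toLinearMap ∘ₗ p.mkQ).mkContinuous 1 norm_apply_le,
    LinearMap.mkContinuous_norm_le _ zero_le_one _, ?_, fun y hy => ?_⟩
  · exact hΛx.trans (congrArg _ (QuotientAddGroup.norm_mk (S := p.toAddSubgroup) x))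
  · simp [(Submodule.Quotient.mk_eq_zero p).2 hy]

theorem exists_dual_comp_eq_of_norm_le {E F : Type*} [NormedAddCommGroup E] [NormedSpace 𝕜 E]
    [SeminormedAddCommGroup F] [NormedSpace 𝕜 F] (D : E →ₗ[𝕜] F) {C : ℝ}
    (hD : ∀ x, ‖x‖ ≤ C * ‖D x‖) (ℓ : StrongDual 𝕜 E) :
    ∃ Λ : StrongDual 𝕜 F, ∀ x, Λ (D x) = ℓ x := by
  have hinj : Function.Injective D := (injective_iff_map_eq_zero D).2 fun x hx =>
    norm_le_zero_iff.1 (by simpa only [hx, norm_zero, mul_zero] using hD x)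
  let e := LinearEquiv.ofInjective D hinj
  have norm_le (y : LinearMap.range D) : ‖ℓ (e.symm y)‖ ≤ ‖ℓ‖ * C * ‖y‖ := by
    obtain ⟨x, rfl⟩ := e.surjective y
    rw [e.symm_apply_apply, mul_assoc]
    exact ℓ.le_opNorm_of_le (hD x)
  obtain ⟨Λ, hΛ, -⟩ := exists_extension_norm_eq (LinearMap.range D)
    ((ℓ.toLinearMap ∘ₗ e.symm.toLinearMap).mkContinuous _ norm_le)
  refine ⟨Λ, fun x => (hΛ (e x)).trans ?_⟩
  simp

end HahnBanach

namespace Linf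

section Mean

variable {ι : Type*}

theorem abs_apply_le_norm (f : Linf ι) (i : ι) : |f i| ≤ ‖f‖ :=
  lp.norm_apply_le_norm ENNReal.top_ne_zero f i

theorem norm_lone_le : ‖lone ι‖ ≤ 1 :=
  lp.norm_le_of_forall_le zero_le_one fun _ => norm_one.le

theorem norm_le_apply_lone {μ : Linf ι →L[ℝ] ℝ} (hpos : ∀ f : Linf ι, (∀ i, 0 ≤ f i) → 0 ≤ μ f) :
    ‖μ‖ ≤ μ (lone ι) := by
  have apply_le (f : Linf ι) : μ f ≤ μ (lone ι) * ‖f‖ := by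
    have hdiff : 0 ≤ μ (‖f‖ • lone ι - f) := hpos _ fun i => by
      change 0 ≤ ‖f‖ * 1 - f i
      linarith [le_of_abs_le (abs_apply_le_norm f i)]
    rw [map_sub, map_smul, smul_eq_mul] at hdiff
    linarith
  refine μ.opNorm_le_bound (hpos _ fun _ => zero_le_one) fun f => abs_le'.2 ⟨apply_le f, ?_⟩
  simpa using apply_le (-f)

theorem apply_lone_le_norm (μ : Linf ι →L[ℝ] ℝ) : μ (lone ι) ≤ ‖μ‖ :=
  (le_abs_self _).trans (μ.unit_le_opNorm _ norm_lone_le)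

theorem apply_nonneg_of_norm_le_one {μ : Linf ι →L[ℝ] ℝ} (hμ : ‖μ‖ ≤ 1) (hone : μ (lone ι) = 1)
    {f : Linf ι} (hf : ∀ i, 0 ≤ f i) : 0 ≤ μ f := by
  have norm_diff_le : ‖‖f‖ • lone ι - f‖ ≤ ‖f‖ :=
    lp.norm_le_of_forall_le (norm_nonneg f) fun i => by
      change |‖f‖ * 1 - f i| ≤ ‖f‖
      have apply_le := le_of_abs_le (abs_apply_le_norm f i)
      exact abs_le.2 ⟨by linarith [norm_nonneg f], by linarith [hf i]⟩
  have hdiff : μ (‖f‖ • lone ι - f) ≤ 1 * ‖f‖ :=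
    (le_abs_self _).trans (μ.le_of_opNorm_le_of_le hμ norm_diff_le)
  rw [map_sub, map_smul, hone, smul_eq_mul] at hdiff
  linarith

end Mean

section Duality

variable {ι : Type*}

/-- The duality pairing `⟨φ, f⟩ = ∑ φ i * f i` between `ℓ¹` and `ℓ∞`. -/
def pairing (ι : Type*) : ℓ¹(ι, ℝ) →L[ℝ] Linf ι →L[ℝ] ℝ :=
  lp.dualPairing 1 ∞ (fun _ => ContinuousLinearMap.mul ℝ ℝ) (K := 1) fun _ => by simp

theorem pairing_apply (φ : ℓ¹(ι, ℝ)) (f : Linf ι) : pairing ι φ f = ∑' i, φ i * f i :=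
  rfl

theorem pairing_le (φ : ℓ¹(ι, ℝ)) (f : Linf ι) : pairing ι φ f ≤ ‖φ‖ * ‖f‖ := by
  have norm_pairing : ‖pairing ι‖ ≤ 1 := lp.norm_dualPairing _ _
  simpa using (le_abs_self _).trans
    ((pairing ι φ).le_of_opNorm_le ((pairing ι).le_of_opNorm_le norm_pairing φ) f)

theorem pairing_single_one [DecidableEq ι] (i : ι) (f : Linf ι) :
    pairing ι (lp.single 1 i 1) f = f i := by
  rw [pairing_apply, tsum_eq_single i fun j hj => by rw [lp.single_apply_ne _ _ _ hj, zero_mul],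
    lp.single_apply_self, one_mul]

theorem pairing_toNorm_lone (φ : ℓ¹(ι, ℝ)) : pairing ι (lp.toNorm φ) (lone ι) = ‖φ‖ := by
  rw [lp.norm_eq_tsum_rpow (by simp)]
  simp [pairing_apply, lone, lp.toNorm]

/-- The bounded function `i ↦ Λ δᵢ` representing a functional `Λ` on `ℓ¹`. -/
def ofDual [DecidableEq ι] (Λ : StrongDual ℝ ℓ¹(ι, ℝ)) : Linf ι :=
  ⟨fun i => Λ (lp.single 1 i 1), memℓp_infty ⟨‖Λ‖, by
    rintro _ ⟨i, rfl⟩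
    exact Λ.unit_le_opNorm _ (by simp [lp.norm_single])⟩⟩

end Duality

section Translation

variable {G : Type*} [Group G]

/-- Left translation on `ℓ∞(G)` as a linear map. -/
def ltransₗ (g : G) : Linf G →ₗ[ℝ] Linf G where
  toFun := ltrans g
  map_add' _ _ := rfl
  map_smul' _ _ := rfl

theorem ltrans_zero (g : G) : ltrans g (0 : Linf G) = 0 :=
  rfl

/-- Left translation `(g · φ)(h) = φ (g⁻¹ h)` on `ℓ¹(G)`. -/
def ellOneTrans (g : G) : ℓ¹(G, ℝ) →ₗ[ℝ] ℓ¹(G, ℝ) where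
  toFun φ := ⟨fun h => φ (g⁻¹ * h), memℓp_gen <|
    (Equiv.mulLeft g⁻¹).summable_iff.2 ((lp.memℓp φ).summable (by simp))⟩
  map_add' _ _ := rfl
  map_smul' _ _ := rfl

theorem ellOneTrans_apply (g : G) (φ : ℓ¹(G, ℝ)) (h : G) : ellOneTrans g φ h = φ (g⁻¹ * h) :=
  rfl

theorem ellOneTrans_single [DecidableEq G] (g h : G) (a : ℝ) :
    ellOneTrans g (lp.single 1 h a) = lp.single 1 (g * h) a := by
  ext k
  simp [ellOneTrans_apply, lp.single_apply, Pi.single_apply, inv_mul_eq_iff_eq_mul]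

theorem pairing_ltrans (g : G) (φ : ℓ¹(G, ℝ)) (f : Linf G) :
    pairing G φ (ltrans g f) = pairing G (ellOneTrans g⁻¹ φ) f := by
  rw [pairing_apply, pairing_apply, ← (Equiv.mulLeft g).tsum_eq]
  simp [ltrans, ellOneTrans_apply]

theorem norm_ellOneTrans_toNorm_sub_le (g : G) (φ : ℓ¹(G, ℝ)) :
    ‖ellOneTrans g (lp.toNorm φ) - lp.toNorm φ‖ ≤ ‖ellOneTrans g φ - φ‖ :=
  lp.norm_mono one_ne_zero fun h => abs_abs_sub_abs_le_abs_sub (φ (g⁻¹ * h)) (φ h)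

end Translation

section Boundary

variable {G : Type*} [Group G]

/-- The boundary map `C₁ → C₀`, `(f_g)_g ↦ ∑ (g · f_g - f_g)`, of group homology with coefficients
in `ℓ∞(G)`, that is, on finitely supported chains only. -/
def boundary (G : Type*) [Group G] : (G →₀ Linf G) →ₗ[ℝ] Linf G :=
  Finsupp.lsum ℝ fun g => ltransₗ g - LinearMap.id

theorem boundary_apply (c : G →₀ Linf G) :
    boundary G c = ∑ g ∈ c.support, (ltrans g (c g) - c g) :=
  rfl

theorem boundary_single (g : G) (f : Linf G) :
    boundary G (Finsupp.single g f) = ltrans g f - f := by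
  rw [boundary, Finsupp.lsum_single]
  rfl

theorem hasSum_boundary (c : G →₀ Linf G) :
    HasSum (fun g => ltrans g (c g) - c g) (boundary G c) :=
  hasSum_sum_of_ne_finset_zero fun g hg => by
    rw [Finsupp.notMem_support_iff.1 hg, ltrans_zero, sub_zero]

/-- The map `φ ↦ (g⁻¹ · φ - φ)_{g ∈ S}` on `ℓ¹(G)`, whose adjoint is `boundary` on chains supported
in `S`. -/
def coboundary (S : Finset G) : ℓ¹(G, ℝ) →ₗ[ℝ] S → ℓ¹(G, ℝ) :=
  LinearMap.pi fun g => ellOneTrans (g : G)⁻¹ - LinearMap.id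

theorem coboundary_apply (S : Finset G) (φ : ℓ¹(G, ℝ)) (g : S) :
    coboundary S φ g = ellOneTrans (g : G)⁻¹ φ - φ :=
  rfl

theorem pairing_toNorm_boundary_le (c : G →₀ Linf G) (φ : ℓ¹(G, ℝ)) :
    pairing G (lp.toNorm φ) (boundary G c) ≤
      (∑ g ∈ c.support, ‖c g‖) * ‖coboundary c.support φ‖ := by
  rw [boundary_apply, map_sum, Finset.sum_mul]
  refine Finset.sum_le_sum fun g hg => ?_
  calc pairing G (lp.toNorm φ) (ltrans g (c g) - c g)
      = pairing G (ellOneTrans g⁻¹ (lp.toNorm φ) - lp.toNorm φ) (c g) := by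
        rw [map_sub, pairing_ltrans, map_sub, sub_apply]
    _ ≤ ‖ellOneTrans g⁻¹ (lp.toNorm φ) - lp.toNorm φ‖ * ‖c g‖ := pairing_le _ _
    _ ≤ ‖ellOneTrans g⁻¹ φ - φ‖ * ‖c g‖ := by
        gcongr
        exact norm_ellOneTrans_toNorm_sub_le _ _
    _ ≤ ‖coboundary c.support φ‖ * ‖c g‖ := by
        gcongr
        exact norm_le_pi_norm (coboundary c.support φ) ⟨g, hg⟩
    _ = ‖c g‖ * ‖coboundary c.support φ‖ := mul_comm _ _

theorem exists_norm_le_mul_norm_coboundary {c : G →₀ Linf G} (hc : ‖lone G - boundary G c‖ < 1) :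
    ∃ C : ℝ, ∀ φ, ‖φ‖ ≤ C * ‖coboundary c.support φ‖ := by
  set r := ‖lone G - boundary G c‖
  refine ⟨(1 - r)⁻¹ * ∑ g ∈ c.support, ‖c g‖, fun φ => ?_⟩
  rw [mul_assoc, le_inv_mul_iff₀ (sub_pos.2 hc), sub_mul, one_mul, sub_le_iff_le_add]
  calc ‖φ‖ = pairing G (lp.toNorm φ) (boundary G c)
        + pairing G (lp.toNorm φ) (lone G - boundary G c) := by
        rw [← map_add, add_sub_cancel, pairing_toNorm_lone]
    _ ≤ (∑ g ∈ c.support, ‖c g‖) * ‖coboundary c.support φ‖ + ‖lp.toNorm φ‖ * r :=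
        add_le_add (pairing_toNorm_boundary_le c φ) (pairing_le _ _)
    _ = (∑ g ∈ c.support, ‖c g‖) * ‖coboundary c.support φ‖ + r * ‖φ‖ := by
        rw [lp.norm_toNorm, mul_comm r]

theorem mem_range_boundary_of_coboundary_eq {S : Finset G} {Λ : StrongDual ℝ (S → ℓ¹(G, ℝ))}
    {b : Linf G} (hΛ : ∀ φ, Λ (coboundary S φ) = pairing G φ b) :
    b ∈ LinearMap.range (boundary G) := by
  classical
  let F (g : S) : Linf G := ofDual (Λ ∘L ContinuousLinearMap.single ℝ (fun _ => ℓ¹(G, ℝ)) g)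
  refine ⟨∑ g : S, Finsupp.single (g : G) (F g), ?_⟩
  ext h
  calc boundary G (∑ g : S, Finsupp.single (g : G) (F g)) h
      = ∑ g : S, (F g ((g : G)⁻¹ * h) - F g h) := by
        simp only [map_sum, boundary_single, lp.coeFn_sum, Finset.sum_apply]
        rfl
    _ = ∑ g : S, Λ (Pi.single g (coboundary S (lp.single 1 h 1) g)) := by
        refine Finset.sum_congr rfl fun g _ => ?_
        rw [coboundary_apply, ellOneTrans_single, Pi.single_sub, map_sub]
        rfl
    _ = Λ (coboundary S (lp.single 1 h 1)) := by
        rw [← map_sum, Finset.univ_sum_single]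
    _ = b h := by rw [hΛ, pairing_single_one]

theorem boundary_surjective_of_norm_lt_one {c : G →₀ Linf G}
    (hc : ‖lone G - boundary G c‖ < 1) : Function.Surjective (boundary G) := by
  intro b
  obtain ⟨C, hC⟩ := exists_norm_le_mul_norm_coboundary hc
  obtain ⟨Λ, hΛ⟩ :=
    exists_dual_comp_eq_of_norm_le (coboundary c.support) hC ((pairing G).flip b)
  exact mem_range_boundary_of_coboundary_eq hΛ

theorem exists_invariant_mean_of_lone_notMem (h : lone G ∉ LinearMap.range (boundary G)) :
    ∃ μ : Linf G →L[ℝ] ℝ,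
      (∀ f : Linf G, (∀ i, 0 ≤ f i) → 0 ≤ μ f) ∧ ‖μ‖ = 1 ∧ ∀ g f, μ (ltrans g f) = μ f := by
  obtain ⟨μ, norm_le, apply_eq_infDist, apply_boundary⟩ :=
    exists_dual_eq_infDist (LinearMap.range (boundary G)) (lone G)
  have one_le_infDist : 1 ≤ Metric.infDist (lone G) (LinearMap.range (boundary G)) := by
    refine (Metric.le_infDist ⟨0, zero_mem _⟩).2 ?_
    rintro _ ⟨c, rfl⟩
    rw [dist_eq_norm]
    exact not_lt.1 fun hc => h (boundary_surjective_of_norm_lt_one hc (lone G))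
  have one_le_apply : 1 ≤ μ (lone G) := one_le_infDist.trans_eq apply_eq_infDist.symm
  have apply_lone : μ (lone G) = 1 := ((apply_lone_le_norm μ).trans norm_le).antisymm one_le_apply
  refine ⟨μ, fun f => apply_nonneg_of_norm_le_one norm_le apply_lone,
    norm_le.antisymm (one_le_apply.trans (apply_lone_le_norm μ)), fun g f => ?_⟩
  rw [← sub_eq_zero, ← map_sub, ← boundary_single]
  exact apply_boundary _ ⟨_, rfl⟩

end Boundary

end Linf

open Linf in
theorem amenable_iff_no_ell_one_family_summing_to_one_general (G : Type*) [Group G] :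
    (∃ μ : Linf G →L[ℝ] ℝ,
        (∀ f : Linf G, (∀ h : G, 0 ≤ f h) → 0 ≤ μ f) ∧ ‖μ‖ = 1 ∧
        (∀ (g : G) (f : Linf G), μ (ltrans g f) = μ f)) ↔
      ¬ ∃ F : G → Linf G, Summable (fun g : G => ‖F g‖) ∧
          HasSum (fun g : G => ltrans g (F g) - F g) (lone G) := by
  constructor
  · rintro ⟨μ, hpos, hnorm, hinv⟩ ⟨F, -, hF⟩
    have apply_lone : μ (lone G) = 0 :=
      (hF.mapL μ).unique (by simp only [map_sub, hinv, sub_self, hasSum_zero])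
    linarith [norm_le_apply_lone hpos]
  · intro hno
    refine exists_invariant_mean_of_lone_notMem ?_
    rintro ⟨c, hc⟩
    have summable_norm : Summable fun g => ‖c g‖ :=
      summable_of_hasFiniteSupport (c.hasFiniteSupport.subset fun g hg => norm_ne_zero_iff.1 hg)
    exact hno ⟨c, summable_norm, hc ▸ hasSum_boundary c⟩

/-- A countable discrete group `G` is amenable if and only if there is no family
`(f_g)_{g ∈ G}` in `ℓ∞(G)` with `Σ_g ‖f_g‖_∞ < ∞` and `Σ_g (g·f_g − f_g) = 1`
(the sum converging in the sup norm); i.e. the fundamental class `ι[1]` is nonzero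
in the `ℓ¹`-homology group `H₀^{ℓ¹}(G, ℓ∞(G))`. -/
theorem amenable_iff_no_ell_one_family_summing_to_one
    (G : Type*) [Group G] [Countable G] :
    (∃ μ : Linf G →L[ℝ] ℝ,
        (∀ f : Linf G, (∀ h : G, 0 ≤ f h) → 0 ≤ μ f) ∧ ‖μ‖ = 1 ∧
        (∀ (g : G) (f : Linf G), μ (ltrans g f) = μ f)) ↔
      ¬ ∃ F : G → Linf G, Summable (fun g : G => ‖F g‖) ∧
          HasSum (fun g : G => ltrans g (F g) - F g) (lone G) := by
  exact amenable_iff_no_ell_one_family_summing_to_one_general G
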